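/- Let d > 2s with s ∈ (0,1), p ∈ [2, 2d/(d−2s)], and suppose ρ satisfies the two-power bounds with γ_0 ∈ [0,d) and γ ∈ (d, d+ps]. Then the integration-by-parts formula fails in X_{p,s,ρ}: there exist v, w ∈ X_{p,s,ρ} with ∫ v (−Δ)^s w dx ≠ ∫ (−Δ)^s v · w dx. In fact, the constant function 1 lies in X_{p,s,ρ} with (−Δ)^s 1 = 0, while for any nonnegative nontrivial φ ∈ C_c^∞(ℝ^d) the Riesz potential Φ = I_{d,s} ∗ φ lies in X_{p,s,ρ} with (−Δ)^s Φ = φ; taking v = 1, w = Φ gives 0 = ∫ (−Δ)^s(1) Φ dx ≠ ∫ 1 · (−Δ)^s Φ dx = ∫ φ dx > 0. -/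

import Mathlib

open MeasureTheory Filter Metric Set
open scoped Topology ENNReal

noncomputable section

abbrev Ed (d : ℕ) := EuclideanSpace ℝ (Fin d)

/-- Truncated (away from the singularity) fractional-Laplacian integral. -/
noncomputable def fracLapTrunc (d : ℕ) (s : ℝ) (f : Ed d → ℝ) (x : Ed d) (ε : ℝ) : ℝ :=
  ∫ y in {y : Ed d | ε ≤ dist x y}, (f x - f y) / dist x y ^ ((d : ℝ) + 2 * s)

/-- Fractional Laplacian, as a principal value (limit of truncated integrals),
with normalization constant `Cds`. -/
noncomputable def fracLap (d : ℕ) (s Cds : ℝ) (f : Ed d → ℝ) (x : Ed d) : ℝ :=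
  Cds * limUnder (𝓝[>] (0:ℝ)) (fracLapTrunc d s f x)

/-- `V` is the distributional fractional Laplacian of `v`. -/
def IsDistFracLap (d : ℕ) (s Cds : ℝ) (v V : Ed d → ℝ) : Prop :=
  ∀ φ : Ed d → ℝ, ContDiff ℝ (⊤ : ℕ∞) φ → HasCompactSupport φ →
    ∫ x, v x * fracLap d s Cds φ x = ∫ x, V x * φ x

/-- The nonlocal quantity `l_{p,s}(f)(x) = ∫ |f x - f y|^p / |x-y|^{d+ps} dy`. -/
noncomputable def lps (d : ℕ) (p s : ℝ) (f : Ed d → ℝ) (x : Ed d) : ℝ :=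
  ∫ y, |f x - f y| ^ p / dist x y ^ ((d : ℝ) + p * s)

/-- A weight comparable to `|x|^{-γ₀}` on the unit ball and to `|x|^{-γ}` outside. -/
def TwoPowerWeight (d : ℕ) (ρ : Ed d → ℝ) (c C γ₀ γ : ℝ) : Prop :=
  0 < c ∧ c < C ∧
  (∀ᵐ x : Ed d, ‖x‖ ≤ 1 → c * ‖x‖ ^ (-γ₀) ≤ ρ x ∧ ρ x ≤ C * ‖x‖ ^ (-γ₀)) ∧
  (∀ᵐ x : Ed d, 1 < ‖x‖ → c * ‖x‖ ^ (-γ) ≤ ρ x ∧ ρ x ≤ C * ‖x‖ ^ (-γ))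

/-- Standard mollification `f_ε = η_ε ∗ f` with `η_ε(x) = ε^{-d} η(x/ε)`. -/
noncomputable def mollify (d : ℕ) (η : Ed d → ℝ) (ε : ℝ) (f : Ed d → ℝ) (x : Ed d) : ℝ :=
  ∫ y, (ε ^ (-(d:ℝ)) * η (ε⁻¹ • (x - y))) * f y

/-- A smooth nonnegative probability mollifier supported in the unit ball. -/
def IsMollifier (d : ℕ) (η : Ed d → ℝ) : Prop :=
  ContDiff ℝ (⊤ : ℕ∞) η ∧ (∀ x, 0 ≤ η x) ∧ tsupport η ⊆ closedBall (0 : Ed d) 1 ∧ ∫ x, η x = 1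

/-- Membership in the weighted Lebesgue space `L^p(ρ dx)`. -/
def MemWLp (d : ℕ) (p : ℝ) (ρ f : Ed d → ℝ) : Prop :=
  AEStronglyMeasurable f (volume : Measure (Ed d)) ∧
    Integrable (fun x => |f x| ^ p * ρ x)

/-- `v ∈ X_{p,s,ρ}` with distributional fractional Laplacian `V`. -/
def MemX (d : ℕ) (s Cds p : ℝ) (ρ : Ed d → ℝ) (v V : Ed d → ℝ) : Prop :=
  MemWLp d p ρ v ∧ IsDistFracLap d s Cds v V ∧
    MemWLp d (p / (p - 1)) (fun x => ρ x ^ (-(p / (p - 1) - 1))) V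

/-- Weighted `L^p` norm. -/
noncomputable def wNorm (d : ℕ) (p : ℝ) (ρ f : Ed d → ℝ) : ℝ :=
  (∫ x, |f x| ^ p * ρ x) ^ (1 / p)

/-- Norm of the space `X_{p,s,ρ}` (on the pair `(v, (−Δ)^s v)`). -/
noncomputable def xNorm (d : ℕ) (p : ℝ) (ρ : Ed d → ℝ) (v V : Ed d → ℝ) : ℝ :=
  Real.sqrt ((wNorm d p ρ v) ^ 2 +
    (wNorm d (p / (p - 1)) (fun x => ρ x ^ (-(p / (p - 1) - 1))) V) ^ 2)

/-- Riesz potential `I_{d,s} ∗ f` with kernel constant `κ`. -/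
noncomputable def riesz (d : ℕ) (s κ : ℝ) (f : Ed d → ℝ) (x : Ed d) : ℝ :=
  ∫ y, κ * ‖x - y‖ ^ (-((d:ℝ) - 2 * s)) * f y

end

/-!
Constants are annihilated by `(-Δ)^s`, because `∫ (-Δ)^s φ = 0` for every test function `φ`. A Riesz
potential `w` of a positive function is bounded, while `(-Δ)^s w` has positive integral up to the
sign of the normalization constant, so integration by parts fails for the pair `(1, w)`. Both
functions lie in `L^p(ρ)` since `γ₀ < d < γ` makes `ρ` integrable.

The Gaussian is used as the source instead of some `φ ∈ C_c^∞`: its Riesz potential is then the real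
part of the Fourier transform of `|ξ|^{-2s} e^{-π|ξ|²}`. By rotation invariance and scaling, the
Fourier multiplier of `(-Δ)^s` is a constant times `|ξ|^{2s}`, so `(-Δ)^s` sends this potential to a
multiple of the Gaussian, whose decay beats any power growth of the dual weight.
-/

section Development

open Module
open scoped FourierTransform NNReal Real RealInnerProductSpace

section NormPowers

variable {E : Type*} [NormedAddCommGroup E] [NormedSpace ℝ E] [FiniteDimensional ℝ E]
  [MeasurableSpace E] [BorelSpace E] {μ : Measure E} [μ.IsAddHaarMeasure]
  {F : Type*} [NormedAddCommGroup F]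

lemma integrableOn_compl_ball_norm_rpow {b r : ℝ} (hb : finrank ℝ E < b) (hr : 0 < r) :
    IntegrableOn (fun x : E => ‖x‖ ^ (-b)) (ball 0 r)ᶜ μ := by
  have hb0 : 0 ≤ b := (Nat.cast_nonneg _).trans hb.le
  refine ((integrable_one_add_norm (μ := μ) hb).const_mul ((1 + r⁻¹) ^ b)).integrableOn.mono'
    (by fun_prop : Measurable _).aestronglyMeasurable ?_
  refine ae_restrict_of_forall_mem isOpen_ball.measurableSet.compl fun x hx => ?_
  have hrx : r ≤ ‖x‖ := by simpa using hx
  have hx0 : 0 < ‖x‖ := hr.trans_le hrx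
  have hone : 1 ≤ r⁻¹ * ‖x‖ := by rwa [← div_eq_inv_mul, one_le_div hr]
  calc ‖‖x‖ ^ (-b)‖ = (1 + r⁻¹) ^ b * ((1 + r⁻¹) * ‖x‖) ^ (-b) := by
        rw [Real.norm_of_nonneg (by positivity), Real.mul_rpow (by positivity) hx0.le, ← mul_assoc,
          ← Real.rpow_add (by positivity), add_neg_cancel, Real.rpow_zero, one_mul]
    _ ≤ (1 + r⁻¹) ^ b * (1 + ‖x‖) ^ (-b) := by
        gcongr (1 + r⁻¹) ^ b * ?_
        exact Real.rpow_le_rpow_of_nonpos (by positivity) (by linarith) (neg_nonpos.2 hb0)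

variable [Nontrivial E]

lemma integrableOn_closedBall_norm_rpow {a : ℝ} (ha : a < finrank ℝ E) (r : ℝ) :
    IntegrableOn (fun x : E => ‖x‖ ^ (-a)) (closedBall 0 r) μ := by
  have hloc : LocallyIntegrable (fun x : E => ‖x‖ ^ (-a)) μ :=
    locallyIntegrable_of_norm_le_rpow (C := 1) finrank_pos ha
      (ae_of_all _ fun x => by rw [one_mul, Real.norm_of_nonneg (by positivity)])
      (by fun_prop : Measurable _).aestronglyMeasurable
  exact hloc.integrableOn_isCompact (isCompact_closedBall 0 r)

lemma integrable_of_norm_le_norm_rpow {f : E → F} {C a b : ℝ} (hf : AEStronglyMeasurable f μ)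
    (ha : a < finrank ℝ E) (hb : finrank ℝ E < b)
    (hin : ∀ᵐ x ∂μ, ‖x‖ ≤ 1 → ‖f x‖ ≤ C * ‖x‖ ^ (-a))
    (hout : ∀ᵐ x ∂μ, 1 < ‖x‖ → ‖f x‖ ≤ C * ‖x‖ ^ (-b)) : Integrable f μ := by
  have hball : MeasurableSet (closedBall (0 : E) 1) := isClosed_closedBall.measurableSet
  rw [← integrableOn_univ, ← union_compl_self (closedBall (0 : E) 1)]
  refine IntegrableOn.union ?_ ?_
  · refine ((integrableOn_closedBall_norm_rpow ha 1).const_mul C).mono' hf.restrict ?_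
    filter_upwards [ae_restrict_of_ae hin, ae_restrict_mem hball] with x hx hxm
    exact hx (by simpa using hxm)
  · refine (((integrableOn_compl_ball_norm_rpow hb one_pos).mono_set
      (compl_subset_compl.2 ball_subset_closedBall)).const_mul C).mono' hf.restrict ?_
    filter_upwards [ae_restrict_of_ae hout, ae_restrict_mem hball.compl] with x hx hxm
    exact hx (by simpa using hxm)

lemma integrable_norm_rpow_smul_of_norm_le_min [NormedSpace ℝ F] {f : E → F} {C α : ℝ}
    (hα : α ∈ Ioo (finrank ℝ E : ℝ) (finrank ℝ E + 2)) (hf : AEStronglyMeasurable f μ)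
    (hfC : ∀ z, ‖f z‖ ≤ C * min (‖z‖ ^ 2) 1) :
    Integrable (fun z => ‖z‖ ^ (-α) • f z) μ := by
  have hC : ∀ z, ‖‖z‖ ^ (-α) • f z‖ ≤ ‖z‖ ^ (-α) * (C * min (‖z‖ ^ 2) 1) := fun z => by
    rw [norm_smul, Real.norm_of_nonneg (by positivity)]
    gcongr
    exact hfC z
  have hC0 : 0 ≤ C := by
    obtain ⟨e, he⟩ := exists_norm_eq E zero_le_one
    simpa [he] using (norm_nonneg _).trans (hfC e)
  refine integrable_of_norm_le_norm_rpow (C := C) (a := α - 2) (b := α)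
    ((by fun_prop : Measurable fun z : E => ‖z‖ ^ (-α)).aestronglyMeasurable.smul hf)
    (by linarith [hα.2]) hα.1 ?_ (ae_of_all _ fun z _ => ?_)
  · filter_upwards [Measure.ae_ne μ 0] with z hz _
    calc ‖‖z‖ ^ (-α) • f z‖ ≤ ‖z‖ ^ (-α) * (C * ‖z‖ ^ 2) := by
          refine (hC z).trans ?_
          gcongr
          exact min_le_left _ _
      _ = C * ‖z‖ ^ (-(α - 2)) := by
          rw [neg_sub, sub_eq_neg_add, Real.rpow_add (norm_pos_iff.2 hz), Real.rpow_two]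
          ring
  · calc ‖‖z‖ ^ (-α) • f z‖ ≤ ‖z‖ ^ (-α) * (C * 1) := by
          refine (hC z).trans ?_
          gcongr
          exact min_le_right _ _
      _ = C * ‖z‖ ^ (-α) := by ring

lemma integrable_norm_rpow_mul_exp_neg_mul_sq {q b : ℝ} (hq : -(finrank ℝ E : ℝ) < q)
    (hb : 0 < b) : Integrable (fun x : E => ‖x‖ ^ q * Real.exp (-b * ‖x‖ ^ 2)) μ := by
  refine (integrable_fun_norm_addHaar μ
    (f := fun r : ℝ => r ^ q * Real.exp (-b * r ^ 2))).2 ?_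
  have hradial := integrableOn_rpow_mul_exp_neg_mul_sq hb (s := (finrank ℝ E : ℝ) - 1 + q)
    (by linarith)
  refine hradial.congr_fun (fun r (hr : 0 < r) => ?_) measurableSet_Ioi
  simp only [smul_eq_mul]
  rw [← Real.rpow_natCast r (finrank ℝ E - 1), ← mul_assoc, ← Real.rpow_add hr,
    Nat.cast_pred finrank_pos]

end NormPowers

section SecondDifference

/-- The symmetric second difference `2 f(x) - f(x + z) - f(x - z)`, grouped into the two
first differences whose average over `±z` enters the fractional Laplacian. -/
def secondDiff {E F : Type*} [AddGroup E] [AddGroup F] (f : E → F) (x z : E) : F :=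
  (f x - f (x + z)) + (f x - f (x - z))

variable {E : Type*} [NormedAddCommGroup E] {F : Type*} [NormedAddCommGroup F] {f : E → F}

lemma continuous_uncurry_secondDiff (hf : Continuous f) :
    Continuous (Function.uncurry (secondDiff f)) := by
  unfold secondDiff Function.uncurry
  fun_prop

lemma norm_secondDiff_le_of_norm_le {S : ℝ} (hf : ∀ x, ‖f x‖ ≤ S) (x z : E) :
    ‖secondDiff f x z‖ ≤ 4 * S :=
  calc ‖secondDiff f x z‖ ≤ (‖f x‖ + ‖f (x + z)‖) + (‖f x‖ + ‖f (x - z)‖) :=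
        (norm_add_le _ _).trans (add_le_add (norm_sub_le _ _) (norm_sub_le _ _))
    _ ≤ 4 * S := by linarith [hf x, hf (x + z), hf (x - z)]

-- The second difference in direction `z` is supported in three translates of `tsupport f`.
lemma integral_norm_secondDiff_le [MeasurableSpace E] [BorelSpace E] {μ : Measure E}
    [μ.IsAddHaarMeasure] (hc : HasCompactSupport f) {z : E} {B : ℝ}
    (hB : ∀ x, ‖secondDiff f x z‖ ≤ B) :
    ∫ x, ‖secondDiff f x z‖ ∂μ ≤ 3 * μ.real (tsupport f) * B := by
  set K := tsupport f
  set g : E → ℝ := K.indicator 1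
  have hg : Integrable g μ :=
    (integrable_indicator_iff hc.measurableSet).2
      (integrableOn_const hc.isCompact.measure_lt_top.ne)
  have hgp : Integrable (fun x => g (x + z)) μ := hg.comp_add_right z
  have hgm : Integrable (fun x => g (x - z)) μ := hg.comp_sub_right z
  have hadd : Integrable (fun x => g x + g (x + z)) μ := hg.add hgp
  have hB0 : 0 ≤ B := (norm_nonneg _).trans (hB 0)
  have hg0 : ∀ x, 0 ≤ g x := indicator_nonneg fun _ _ => zero_le_one
  have hgK : ∫ x, g x ∂μ = μ.real K := integral_indicator_one hc.measurableSet
  have hle : ∀ x, ‖secondDiff f x z‖ ≤ (g x + g (x + z) + g (x - z)) * B := by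
    intro x
    by_cases h : x ∈ K ∨ x + z ∈ K ∨ x - z ∈ K
    · refine (hB x).trans (le_mul_of_one_le_left hB0 ?_)
      have h1 := hg0 x
      have h2 := hg0 (x + z)
      have h3 := hg0 (x - z)
      rcases h with h | h | h
      all_goals
        have hone : g _ = 1 := indicator_of_mem h 1
        linarith
    · push Not at h
      rw [secondDiff, image_eq_zero_of_notMem_tsupport h.1, image_eq_zero_of_notMem_tsupport h.2.1,
        image_eq_zero_of_notMem_tsupport h.2.2]
      simpa using mul_nonneg (add_nonneg (add_nonneg (hg0 x) (hg0 (x + z))) (hg0 (x - z))) hB0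
  calc ∫ x, ‖secondDiff f x z‖ ∂μ ≤ ∫ x, (g x + g (x + z) + g (x - z)) * B ∂μ :=
        integral_mono_of_nonneg (ae_of_all _ fun _ => norm_nonneg _)
          ((hadd.add hgm).mul_const B) (ae_of_all _ hle)
    _ = 3 * μ.real K * B := by
        rw [integral_mul_const, integral_add hadd hgm, integral_add hg hgp,
          integral_add_right_eq_self, integral_sub_right_eq_self, hgK]
        ring

variable [NormedSpace ℝ E]

lemma norm_sub_sub_fderiv_le_of_lipschitz [NormedSpace ℝ F] {K : ℝ≥0}
    (hf : Differentiable ℝ f) (hK : LipschitzWith K (fderiv ℝ f)) (x z : E) :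
    ‖f (x + z) - f x - fderiv ℝ f x z‖ ≤ K * ‖z‖ ^ 2 := by
  have hmean := (convex_closedBall x ‖z‖).norm_image_sub_le_of_norm_fderiv_le' (𝕜 := ℝ)
    (φ := fderiv ℝ f x) (C := K * ‖z‖) (x := x) (y := x + z) (fun y _ => hf y)
    (fun y hy => (hK.norm_sub_le y x).trans (by gcongr; simpa [dist_eq_norm] using hy))
    (by simp) (by simp)
  simpa only [add_sub_cancel_left, mul_assoc, ← sq] using hmean

lemma norm_secondDiff_le_of_lipschitz_fderiv [NormedSpace ℝ F] {K : ℝ≥0}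
    (hf : Differentiable ℝ f) (hK : LipschitzWith K (fderiv ℝ f)) (x z : E) :
    ‖secondDiff f x z‖ ≤ 2 * K * ‖z‖ ^ 2 := by
  have hcancel : secondDiff f x z =
      -(f (x + z) - f x - fderiv ℝ f x z) - (f (x + -z) - f x - fderiv ℝ f x (-z)) := by
    rw [secondDiff, map_neg, ← sub_eq_add_neg]
    abel
  calc ‖secondDiff f x z‖
      ≤ ‖f (x + z) - f x - fderiv ℝ f x z‖ + ‖f (x + -z) - f x - fderiv ℝ f x (-z)‖ := by
        rw [hcancel, ← norm_neg (f (x + z) - f x - fderiv ℝ f x z)]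
        exact norm_sub_le _ _
    _ ≤ K * ‖z‖ ^ 2 + K * ‖-z‖ ^ 2 :=
        add_le_add (norm_sub_sub_fderiv_le_of_lipschitz hf hK x z)
          (norm_sub_sub_fderiv_le_of_lipschitz hf hK x (-z))
    _ = 2 * K * ‖z‖ ^ 2 := by rw [norm_neg]; ring

lemma exists_norm_secondDiff_le [NormedSpace ℝ F] (hf : ContDiff ℝ 2 f)
    (hc : HasCompactSupport f) :
    ∃ C : ℝ, 0 ≤ C ∧ ∀ x z, ‖secondDiff f x z‖ ≤ C * min (‖z‖ ^ 2) 1 := by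
  obtain ⟨S, hS⟩ := hc.exists_bound_of_continuous hf.continuous
  obtain ⟨K, hK⟩ := ContDiff.lipschitzWith_of_hasCompactSupport (hc.fderiv (𝕜 := ℝ))
    (hf.fderiv_right (m := 1) (by norm_num)) one_ne_zero
  refine ⟨max (2 * K) (4 * S), le_max_of_le_left (by positivity), fun x z => ?_⟩
  rw [mul_min_of_nonneg _ _ (le_max_of_le_left (by positivity)), mul_one]
  refine le_min ?_ ((norm_secondDiff_le_of_norm_le hS x z).trans (le_max_right _ _))
  refine (norm_secondDiff_le_of_lipschitz_fderiv (hf.differentiable two_ne_zero) hK x z).trans ?_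
  gcongr
  exact le_max_left _ _

end SecondDifference

section HypersingularIntegral

/-- The absolutely convergent form `∫ (2 f(x) - f(x + z) - f(x - z)) |z|^{-α} dz` of the fractional
Laplacian of order `α - dim E`, without its normalization constant. -/
noncomputable def hypersingularIntegral {E F : Type*} [NormedAddCommGroup E] [MeasureSpace E]
    [NormedAddCommGroup F] [NormedSpace ℝ F] (α : ℝ) (f : E → F) (x : E) : F :=
  ∫ z, ‖z‖ ^ (-α) • secondDiff f x z

lemma hypersingularIntegral_ofReal {E : Type*} [NormedAddCommGroup E] [MeasureSpace E] (α : ℝ)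
    (φ : E → ℝ) (x : E) :
    hypersingularIntegral α (fun y => (φ y : ℂ)) x = ((hypersingularIntegral α φ x : ℝ) : ℂ) := by
  unfold hypersingularIntegral secondDiff
  rw [← integral_complex_ofReal]
  congr with z
  simp only [Complex.real_smul, smul_eq_mul]
  push_cast
  rfl

variable {E : Type*} [NormedAddCommGroup E] [InnerProductSpace ℝ E] [FiniteDimensional ℝ E]
  [Nontrivial E] [MeasurableSpace E] [BorelSpace E] {F : Type*} [NormedAddCommGroup F]
  [NormedSpace ℝ F] {f : E → F} {α : ℝ}

lemma integrable_norm_rpow_smul_secondDiff (hα : α ∈ Ioo (finrank ℝ E : ℝ) (finrank ℝ E + 2))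
    (hf : ContDiff ℝ 2 f) (hc : HasCompactSupport f) (x : E) :
    Integrable (fun z => ‖z‖ ^ (-α) • secondDiff f x z) := by
  obtain ⟨C, -, hC⟩ := exists_norm_secondDiff_le hf hc
  have hcont : Continuous (secondDiff f x) :=
    (continuous_uncurry_secondDiff hf.continuous).comp (Continuous.prodMk_right x)
  exact integrable_norm_rpow_smul_of_norm_le_min hα hcont.aestronglyMeasurable (hC x)

lemma integrable_prod_norm_rpow_smul_secondDiff
    (hα : α ∈ Ioo (finrank ℝ E : ℝ) (finrank ℝ E + 2))
    (hf : ContDiff ℝ 2 f) (hc : HasCompactSupport f) :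
    Integrable (fun q : E × E => ‖q.2‖ ^ (-α) • secondDiff f q.1 q.2) := by
  obtain ⟨C, hC0, hC⟩ := exists_norm_secondDiff_le hf hc
  have hfi : Integrable f := hf.continuous.integrable_of_hasCompactSupport hc
  have hmeas : AEStronglyMeasurable (fun q : E × E => ‖q.2‖ ^ (-α) • secondDiff f q.1 q.2) :=
    (by fun_prop : Measurable fun q : E × E => ‖q.2‖ ^ (-α)).aestronglyMeasurable.smul
      (continuous_uncurry_secondDiff hf.continuous).aestronglyMeasurable
  have hker : Integrable fun z : E => ‖z‖ ^ (-α) •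
      (3 * volume.real (tsupport f) * (C * min (‖z‖ ^ 2) 1)) := by
    refine integrable_norm_rpow_smul_of_norm_le_min
      (C := 3 * volume.real (tsupport f) * C) hα (by fun_prop) fun z => ?_
    rw [Real.norm_of_nonneg (by positivity), mul_assoc _ C]
  refine (integrable_prod_iff' hmeas).2 ⟨ae_of_all _ fun z => ?_,
    hker.mono' hmeas.norm.prod_swap.integral_prod_right' (ae_of_all _ fun z => ?_)⟩
  · exact ((hfi.sub (hfi.comp_add_right z)).add (hfi.sub (hfi.comp_sub_right z))).smul (‖z‖ ^ (-α))
  · calc ‖∫ x, ‖‖z‖ ^ (-α) • secondDiff f x z‖‖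
        = ‖z‖ ^ (-α) * ∫ x, ‖secondDiff f x z‖ := by
          simp_rw [norm_smul, Real.norm_of_nonneg (Real.rpow_nonneg (norm_nonneg z) _)]
          rw [integral_const_mul, Real.norm_of_nonneg (by positivity)]
      _ ≤ ‖z‖ ^ (-α) • (3 * volume.real (tsupport f) * (C * min (‖z‖ ^ 2) 1)) := by
          rw [smul_eq_mul]
          gcongr
          exact integral_norm_secondDiff_le hc fun x => hC x z

lemma integrable_hypersingularIntegral (hα : α ∈ Ioo (finrank ℝ E : ℝ) (finrank ℝ E + 2))
    (hf : ContDiff ℝ 2 f) (hc : HasCompactSupport f) : Integrable (hypersingularIntegral α f) :=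
  (integrable_prod_norm_rpow_smul_secondDiff hα hf hc).integral_prod_left

end HypersingularIntegral

section Symbol

lemma one_sub_cos_le_min {E : Type*} [SeminormedAddCommGroup E] [InnerProductSpace ℝ E]
    (z ξ : E) :
    1 - Real.cos (2 * π * ⟪z, ξ⟫) ≤ max ((2 * π * ‖ξ‖) ^ 2 / 2) 2 * min (‖z‖ ^ 2) 1 := by
  have hquad : 1 - Real.cos (2 * π * ⟪z, ξ⟫) ≤ (2 * π * ‖ξ‖) ^ 2 / 2 * ‖z‖ ^ 2 :=
    calc 1 - Real.cos (2 * π * ⟪z, ξ⟫) ≤ (2 * π * ⟪z, ξ⟫) ^ 2 / 2 := by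
          linarith [Real.one_sub_sq_div_two_le_cos (x := 2 * π * ⟪z, ξ⟫)]
      _ ≤ (2 * π * (‖z‖ * ‖ξ‖)) ^ 2 / 2 := by
          rw [mul_pow _ ⟪z, ξ⟫, mul_pow _ (‖z‖ * ‖ξ‖), ← sq_abs ⟪z, ξ⟫]
          gcongr
          exact abs_real_inner_le_norm z ξ
      _ = (2 * π * ‖ξ‖) ^ 2 / 2 * ‖z‖ ^ 2 := by ring
  rw [mul_min_of_nonneg _ _ (by positivity), mul_one]
  refine le_min (hquad.trans ?_) (le_max_of_le_right ?_)
  · gcongr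
    exact le_max_left _ _
  · linarith [Real.neg_one_le_cos (2 * π * ⟪z, ξ⟫)]

variable {E : Type*} [NormedAddCommGroup E] [InnerProductSpace ℝ E] [FiniteDimensional ℝ E]
  [MeasurableSpace E] [BorelSpace E] {α : ℝ}

/-- The Lévy–Khintchine symbol of the measure `|z|^{-α} dz`: the Fourier multiplier of
`½ • hypersingularIntegral α`, for Mathlib's normalization `e^{-2πi⟨x, ξ⟩}` of the Fourier
transform. -/
noncomputable def levySymbol (α : ℝ) (ξ : E) : ℝ :=
  ∫ z : E, ‖z‖ ^ (-α) * (1 - Real.cos (2 * π * ⟪z, ξ⟫))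

lemma integrable_levySymbol [Nontrivial E] (hα : α ∈ Ioo (finrank ℝ E : ℝ) (finrank ℝ E + 2))
    (ξ : E) : Integrable (fun z : E => ‖z‖ ^ (-α) * (1 - Real.cos (2 * π * ⟪z, ξ⟫))) :=
  integrable_norm_rpow_smul_of_norm_le_min hα (by fun_prop) fun z => by
    rw [Real.norm_of_nonneg (sub_nonneg.2 (Real.cos_le_one _))]
    exact one_sub_cos_le_min z ξ

lemma levySymbol_zero : levySymbol α (0 : E) = 0 := by simp [levySymbol]

lemma levySymbol_eq_of_norm_eq {ξ η : E} (h : ‖ξ‖ = ‖η‖) : levySymbol α ξ = levySymbol α η := by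
  set A := (ℝ ∙ (ξ - η))ᗮ.reflection
  have hAξ : A ξ = η := Submodule.reflection_sub h
  unfold levySymbol
  rw [← A.measurePreserving.integral_comp A.toHomeomorph.measurableEmbedding
    (fun z => ‖z‖ ^ (-α) * (1 - Real.cos (2 * π * ⟪z, η⟫)))]
  simp only [← hAξ, LinearIsometryEquiv.inner_map_map, LinearIsometryEquiv.norm_map]

lemma levySymbol_smul {r : ℝ} (hr : 0 < r) (ξ : E) :
    levySymbol α (r • ξ) = r ^ (α - finrank ℝ E) * levySymbol α ξ := by
  have hscale : ∀ z : E, ‖z‖ ^ (-α) * (1 - Real.cos (2 * π * ⟪z, r • ξ⟫)) =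
      r ^ α * (‖r • z‖ ^ (-α) * (1 - Real.cos (2 * π * ⟪r • z, ξ⟫))) := fun z => by
    have hrα : r ^ α * r ^ (-α) = 1 := by rw [← Real.rpow_add hr, add_neg_cancel, Real.rpow_zero]
    rw [inner_smul_right, real_inner_smul_left, norm_smul, Real.norm_of_nonneg hr.le,
      Real.mul_rpow hr.le (norm_nonneg z)]
    linear_combination -(‖z‖ ^ (-α) * (1 - Real.cos (2 * π * (r * ⟪z, ξ⟫)))) * hrα
  unfold levySymbol
  simp_rw [hscale]
  rw [integral_const_mul, Measure.integral_comp_smul_of_nonneg (volume : Measure E)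
      (fun z => ‖z‖ ^ (-α) * (1 - Real.cos (2 * π * ⟪z, ξ⟫))) r (hR := hr.le),
    smul_eq_mul, ← mul_assoc, ← Real.rpow_natCast, ← Real.rpow_neg hr.le, ← Real.rpow_add hr,
    ← sub_eq_add_neg]

lemma levySymbol_pos [Nontrivial E] (hα : α ∈ Ioo (finrank ℝ E : ℝ) (finrank ℝ E + 2)) {ξ : E}
    (hξ : ξ ≠ 0) : 0 < levySymbol α ξ := by
  have hcos : Continuous fun z : E => Real.cos (2 * π * ⟪z, ξ⟫) := by fun_prop
  have hopen : IsOpen ({z : E | Real.cos (2 * π * ⟪z, ξ⟫) < 1} ∩ {0}ᶜ) :=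
    (isOpen_lt hcos continuous_const).inter isOpen_compl_singleton
  have hhalf : 2 * π * ⟪(2 * ‖ξ‖ ^ 2)⁻¹ • ξ, ξ⟫ = π := by
    rw [real_inner_smul_left, real_inner_self_eq_norm_sq]
    field_simp [norm_ne_zero_iff.2 hξ]
  have hne : ({z : E | Real.cos (2 * π * ⟪z, ξ⟫) < 1} ∩ {0}ᶜ).Nonempty := by
    refine ⟨(2 * ‖ξ‖ ^ 2)⁻¹ • ξ, ?_, by simpa using hξ⟩
    rw [mem_ofPred_eq, hhalf, Real.cos_pi]
    norm_num
  refine (integral_pos_iff_support_of_nonneg (fun z => mul_nonneg (by positivity)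
    (sub_nonneg.2 (Real.cos_le_one _))) (integrable_levySymbol hα ξ)).2 ?_
  refine (hopen.measure_pos volume hne).trans_le (measure_mono fun z hz => ?_)
  exact mul_ne_zero (Real.rpow_pos_of_pos (norm_pos_iff.2 hz.2) _).ne' (sub_pos.2 hz.1).ne'

lemma exists_levySymbol_eq_mul_norm_rpow [Nontrivial E]
    (hα : α ∈ Ioo (finrank ℝ E : ℝ) (finrank ℝ E + 2)) :
    ∃ c : ℝ, 0 < c ∧ ∀ ξ : E, levySymbol α ξ = c * ‖ξ‖ ^ (α - finrank ℝ E) := by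
  obtain ⟨e, he⟩ := exists_norm_eq E zero_le_one
  refine ⟨levySymbol α e, levySymbol_pos hα (norm_ne_zero_iff.1 (by simp [he])), fun ξ => ?_⟩
  rcases eq_or_ne ξ 0 with rfl | hξ
  · rw [levySymbol_zero, norm_zero, Real.zero_rpow (sub_pos.2 hα.1).ne', mul_zero]
  · rw [levySymbol_eq_of_norm_eq (η := ‖ξ‖ • e) (by simp [norm_smul, he]),
      levySymbol_smul (norm_pos_iff.2 hξ), mul_comm]

end Symbol

section Fourier

variable {E : Type*} [NormedAddCommGroup E] [InnerProductSpace ℝ E] [FiniteDimensional ℝ E]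
  [MeasurableSpace E] [BorelSpace E] {F : Type*} [NormedAddCommGroup F] [NormedSpace ℂ F]

lemma fourier_const_smul (a : ℝ) (f : E → F) (ξ : E) : 𝓕 (fun x => a • f x) ξ = a • 𝓕 f ξ :=
  congrFun (VectorFourier.fourierIntegral_const_smul 𝐞 volume (innerₗ E) f (a : ℂ)) ξ

lemma fourier_comp_add_right (f : E → F) (z ξ : E) :
    𝓕 (fun x => f (x + z)) ξ = 𝐞 ⟪z, ξ⟫ • 𝓕 f ξ :=
  congrFun (VectorFourier.fourierIntegral_comp_add_right 𝐞 volume (innerₗ E) f z) ξ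

lemma fourierChar_add_fourierChar_neg (t : ℝ) :
    (𝐞 t : ℂ) + 𝐞 (-t) = ((2 * Real.cos (2 * π * t) : ℝ) : ℂ) := by
  rw [Real.fourierChar_apply, Real.fourierChar_apply, mul_neg, Complex.ofReal_mul 2,
    Complex.ofReal_cos, Complex.cos]
  push_cast
  ring

lemma fourier_secondDiff {f : E → F} (hf : Integrable f) (z ξ : E) :
    𝓕 (fun x => secondDiff f x z) ξ = (2 * (1 - Real.cos (2 * π * ⟪z, ξ⟫))) • 𝓕 f ξ := by
  have hchar : ∀ {g : E → F}, Integrable g → Integrable fun x => 𝐞 (-⟪x, ξ⟫) • g x :=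
    (Real.fourierIntegral_convergent_iff ξ).2
  have hdiff : ∀ y, Integrable
      fun x => 𝐞 (-⟪x, ξ⟫) • f x - 𝐞 (-⟪x, ξ⟫) • f (x + y) := fun y =>
    (hchar hf).sub (hchar (hf.comp_add_right y))
  have hmul : (2 * (1 - Real.cos (2 * π * ⟪z, ξ⟫)) : ℝ) • 𝓕 f ξ =
      (𝓕 f ξ - 𝐞 ⟪z, ξ⟫ • 𝓕 f ξ) + (𝓕 f ξ - 𝐞 (-⟪z, ξ⟫) • 𝓕 f ξ) := by
    rw [mul_sub, sub_smul, ← Complex.coe_smul (2 * Real.cos _),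
      ← fourierChar_add_fourierChar_neg, add_smul, mul_one, two_smul, Circle.smul_def,
      Circle.smul_def]
    abel
  rw [hmul, ← fourier_comp_add_right, ← inner_neg_left, ← fourier_comp_add_right]
  simp only [Real.fourier_eq, secondDiff, smul_add, smul_sub, sub_eq_add_neg _ z]
  rw [integral_add (hdiff z) (hdiff (-z)), integral_sub (hchar hf) (hchar (hf.comp_add_right z)),
    integral_sub (hchar hf) (hchar (hf.comp_add_right (-z)))]

lemma fourier_integral_swap {Z : Type*} [MeasurableSpace Z] {ν : Measure Z} [SFinite ν]
    {f : E → Z → F} (hf : Integrable (Function.uncurry f) (volume.prod ν)) (ξ : E) :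
    𝓕 (fun x => ∫ z, f x z ∂ν) ξ = ∫ z, 𝓕 (f · z) ξ ∂ν := by
  have hchar : Integrable (Function.uncurry fun x z => (𝐞 (-⟪x, ξ⟫) : ℂ) • f x z)
      (volume.prod ν) :=
    hf.bdd_smul 1 (φ := fun q : E × Z => (𝐞 (-⟪q.1, ξ⟫) : ℂ))
      (by fun_prop : Measurable _).aestronglyMeasurable
      (ae_of_all _ fun q => (Circle.norm_coe _).le)
  simp only [Real.fourier_eq, Circle.smul_def]
  rw [← integral_integral_swap hchar]
  simp only [integral_smul]

variable {f : E → F} {α : ℝ}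

lemma fourier_hypersingularIntegral [Nontrivial E] [CompleteSpace F]
    (hα : α ∈ Ioo (finrank ℝ E : ℝ) (finrank ℝ E + 2)) (hf : ContDiff ℝ 2 f)
    (hc : HasCompactSupport f) (ξ : E) :
    𝓕 (hypersingularIntegral α f) ξ = (2 * levySymbol α ξ) • 𝓕 f ξ := by
  have hfi : Integrable f := hf.continuous.integrable_of_hasCompactSupport hc
  have hslice : ∀ z : E, 𝓕 (fun x => ‖z‖ ^ (-α) • secondDiff f x z) ξ =
      (2 * (‖z‖ ^ (-α) * (1 - Real.cos (2 * π * ⟪z, ξ⟫)))) • 𝓕 f ξ := fun z => by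
    rw [fourier_const_smul, fourier_secondDiff hfi, smul_smul]
    ring_nf
  unfold hypersingularIntegral
  rw [fourier_integral_swap (integrable_prod_norm_rpow_smul_secondDiff hα hf hc)]
  simp_rw [hslice]
  rw [integral_smul_const, integral_const_mul, levySymbol]

lemma integral_fourier_mul_eq {f g : E → ℂ} (hf : Integrable f) (hg : Integrable g) :
    ∫ ξ, 𝓕 f ξ * g ξ = ∫ x, f x * 𝓕 g x := by
  simpa using! VectorFourier.integral_fourierIntegral_smul_eq_flip (L := innerₗ E)
    Real.continuous_fourierChar continuous_inner hf hg

lemma continuous_fourier {f : E → F} (hf : Integrable f) : Continuous (𝓕 f) :=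
  VectorFourier.fourierIntegral_continuous (L := innerₗ E) Real.continuous_fourierChar
    continuous_inner hf

lemma norm_fourier_le (f : E → F) (ξ : E) : ‖𝓕 f ξ‖ ≤ ∫ x, ‖f x‖ :=
  VectorFourier.norm_fourierIntegral_le_integral_norm 𝐞 volume (innerₗ E) f ξ

lemma integral_re_fourier_mul {f : E → ℂ} {φ : E → ℝ} (hf : Integrable f) (hφ : Integrable φ) :
    ∫ x, (𝓕 f x).re * φ x = (∫ ξ, f ξ * 𝓕 (fun x => (φ x : ℂ)) ξ).re := by
  have hprod : Integrable fun x => 𝓕 f x * (φ x : ℂ) :=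
    hφ.ofReal.bdd_mul (continuous_fourier hf).aestronglyMeasurable
      (ae_of_all _ (norm_fourier_le f))
  have hre := integral_re hprod
  simp only [RCLike.re_eq_complex_re, Complex.re_mul_ofReal] at hre
  exact hre.trans (congrArg Complex.re (integral_fourier_mul_eq hf hφ.ofReal))

end Fourier

section FractionalLaplacian

lemma setIntegral_compl_ball_comp_neg {E F : Type*} [NormedAddCommGroup E] [MeasurableSpace E]
    [BorelSpace E] {μ : Measure E} [μ.IsNegInvariant] [NormedAddCommGroup F] [NormedSpace ℝ F]
    (f : E → F) (r : ℝ) : ∫ z in (ball 0 r)ᶜ, f (-z) ∂μ = ∫ z in (ball 0 r)ᶜ, f z ∂μ := by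
  have hpre : Neg.neg ⁻¹' (ball (0 : E) r)ᶜ = (ball 0 r)ᶜ := by ext; simp
  rw [← (Measure.measurePreserving_neg μ).setIntegral_preimage_emb
    (Homeomorph.neg E).measurableEmbedding f, hpre]

lemma aecover_compl_ball {E : Type*} [NormedAddCommGroup E] [MeasurableSpace E]
    [BorelSpace E] (μ : Measure E) [NullSingletonClass μ] :
    AECover μ (𝓝[>] (0 : ℝ)) fun ε => (ball (0 : E) ε)ᶜ where
  ae_eventually_mem := by
    filter_upwards [Measure.ae_ne μ 0] with z hz
    filter_upwards [nhdsWithin_le_nhds (Iio_mem_nhds (norm_pos_iff.2 hz))] with ε hε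
    simpa using hε.le
  measurableSet _ := isOpen_ball.measurableSet.compl

variable {d : ℕ} {s Cds : ℝ}

lemma fracLapTrunc_eq_setIntegral_compl_ball (f : Ed d → ℝ) (x : Ed d) (ε : ℝ) :
    fracLapTrunc d s f x ε =
      ∫ z in (ball 0 ε)ᶜ, ‖z‖ ^ (-((d : ℝ) + 2 * s)) * (f x - f (x + z)) := by
  have hpre : (x + ·) ⁻¹' {y | ε ≤ dist x y} = (ball 0 ε)ᶜ := by ext; simp
  rw [fracLapTrunc, ← (measurePreserving_add_left volume x).setIntegral_preimage_emb
    (measurableEmbedding_addLeft x), hpre]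
  refine setIntegral_congr_fun isOpen_ball.measurableSet.compl fun z _ => ?_
  simp only [dist_self_add_right, Real.rpow_neg (norm_nonneg z), div_eq_inv_mul]

lemma fracLapTrunc_eq_setIntegral_secondDiff (hs : 0 < s) {f : Ed d → ℝ} (hf : Continuous f)
    {S : ℝ} (hS : ∀ x, ‖f x‖ ≤ S) (x : Ed d) {ε : ℝ} (hε : 0 < ε) :
    fracLapTrunc d s f x ε =
      1 / 2 * ∫ z in (ball 0 ε)ᶜ, ‖z‖ ^ (-((d : ℝ) + 2 * s)) • secondDiff f x z := by
  have hdiff : ∀ e : Ed d → Ed d, Continuous e → IntegrableOn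
      (fun z => ‖z‖ ^ (-((d : ℝ) + 2 * s)) * (f x - f (x + e z))) (ball 0 ε)ᶜ := fun e he => by
    refine (integrableOn_compl_ball_norm_rpow
      (by rw [finrank_euclideanSpace_fin]; linarith) hε).mul_bdd (c := S + S)
      (by fun_prop : Continuous fun z => f x - f (x + e z)).aestronglyMeasurable
      (ae_of_all _ fun z => ?_)
    exact (norm_sub_le _ _).trans (add_le_add (hS _) (hS _))
  have hpos : IntegrableOn (fun z => ‖z‖ ^ (-((d : ℝ) + 2 * s)) * (f x - f (x + z)))
      (ball 0 ε)ᶜ := hdiff id continuous_id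
  have hneg : IntegrableOn (fun z => ‖z‖ ^ (-((d : ℝ) + 2 * s)) * (f x - f (x + -z)))
      (ball 0 ε)ᶜ := hdiff Neg.neg continuous_neg
  have hsymm := setIntegral_compl_ball_comp_neg (μ := volume)
    (fun z => ‖z‖ ^ (-((d : ℝ) + 2 * s)) * (f x - f (x + z))) ε
  simp only [norm_neg] at hsymm
  simp only [secondDiff, smul_eq_mul, mul_add, sub_eq_add_neg x]
  rw [fracLapTrunc_eq_setIntegral_compl_ball, integral_add hpos hneg, hsymm]
  ring

lemma dim_add_two_mul_mem_Ioo (hs : s ∈ Ioo (0 : ℝ) 1) :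
    (d : ℝ) + 2 * s ∈ Ioo (finrank ℝ (Ed d) : ℝ) (finrank ℝ (Ed d) + 2) := by
  rw [finrank_euclideanSpace_fin]
  constructor <;> linarith [hs.1, hs.2]

variable [NeZero d] {φ : Ed d → ℝ}

lemma tendsto_fracLapTrunc (hs : s ∈ Ioo (0 : ℝ) 1) (hφ : ContDiff ℝ 2 φ)
    (hc : HasCompactSupport φ) (x : Ed d) :
    Tendsto (fracLapTrunc d s φ x) (𝓝[>] 0)
      (𝓝 (1 / 2 * hypersingularIntegral ((d : ℝ) + 2 * s) φ x)) := by
  obtain ⟨S, hS⟩ := hc.exists_bound_of_continuous hφ.continuous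
  have hlim := (aecover_compl_ball volume).integral_tendsto_of_countably_generated
    (integrable_norm_rpow_smul_secondDiff (dim_add_two_mul_mem_Ioo hs) hφ hc x)
  refine (hlim.const_mul (1 / 2)).congr' ?_
  filter_upwards [self_mem_nhdsWithin] with ε hε
  exact (fracLapTrunc_eq_setIntegral_secondDiff hs.1 hφ.continuous hS x hε).symm

lemma fracLap_eq_hypersingularIntegral (hs : s ∈ Ioo (0 : ℝ) 1) (hφ : ContDiff ℝ 2 φ)
    (hc : HasCompactSupport φ) (x : Ed d) :
    fracLap d s Cds φ x = Cds / 2 * hypersingularIntegral ((d : ℝ) + 2 * s) φ x := by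
  rw [fracLap, (tendsto_fracLapTrunc hs hφ hc x).limUnder_eq]
  ring

lemma integrable_fracLap (hs : s ∈ Ioo (0 : ℝ) 1) (hφ : ContDiff ℝ 2 φ)
    (hc : HasCompactSupport φ) : Integrable (fracLap d s Cds φ) := by
  rw [funext (fracLap_eq_hypersingularIntegral hs hφ hc)]
  exact (integrable_hypersingularIntegral (dim_add_two_mul_mem_Ioo hs) hφ hc).const_mul _

lemma fourier_fracLap (hs : s ∈ Ioo (0 : ℝ) 1) (hφ : ContDiff ℝ 2 φ)
    (hc : HasCompactSupport φ) (ξ : Ed d) :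
    𝓕 (fun x => (fracLap d s Cds φ x : ℂ)) ξ =
      ((Cds * levySymbol ((d : ℝ) + 2 * s) ξ : ℝ) : ℂ) * 𝓕 (fun x => (φ x : ℂ)) ξ := by
  have hφℂ : ContDiff ℝ 2 fun x => (φ x : ℂ) := Complex.ofRealCLM.contDiff.comp hφ
  have hcℂ : HasCompactSupport fun x => (φ x : ℂ) := hc.comp_left Complex.ofReal_zero
  have hfrac : (fun x => (fracLap d s Cds φ x : ℂ)) = fun x =>
      (Cds / 2) • hypersingularIntegral ((d : ℝ) + 2 * s) (fun y => (φ y : ℂ)) x := by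
    funext x
    rw [hypersingularIntegral_ofReal, fracLap_eq_hypersingularIntegral hs hφ hc, Complex.real_smul,
      Complex.ofReal_mul]
  rw [hfrac, fourier_const_smul,
    fourier_hypersingularIntegral (dim_add_two_mul_mem_Ioo hs) hφℂ hcℂ, smul_smul,
    Complex.real_smul]
  ring_nf

lemma integral_fracLap (hs : s ∈ Ioo (0 : ℝ) 1) (hφ : ContDiff ℝ 2 φ)
    (hc : HasCompactSupport φ) : ∫ x, fracLap d s Cds φ x = 0 := by
  have hzero := fourier_fracLap (Cds := Cds) hs hφ hc 0
  rw [levySymbol_zero, Real.fourier_eq] at hzero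
  simpa [integral_complex_ofReal] using hzero

lemma isDistFracLap_const (hs : s ∈ Ioo (0 : ℝ) 1) (a : ℝ) :
    IsDistFracLap d s Cds (fun _ => a) (fun _ => 0) := fun φ hφ hc => by
  rw [integral_const_mul, integral_fracLap hs (contDiff_infty.1 hφ 2) hc]
  simp

lemma isDistFracLap_re_fourier (hs : s ∈ Ioo (0 : ℝ) 1) {g : Ed d → ℂ} (hg : Integrable g)
    (hσg : Integrable fun ξ => ((Cds * levySymbol ((d : ℝ) + 2 * s) ξ : ℝ) : ℂ) * g ξ) :
    IsDistFracLap d s Cds (fun x => (𝓕 g x).re) fun x =>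
      (𝓕 (fun ξ => ((Cds * levySymbol ((d : ℝ) + 2 * s) ξ : ℝ) : ℂ) * g ξ) x).re := by
  intro φ hφ hc
  have hφ2 : ContDiff ℝ 2 φ := contDiff_infty.1 hφ 2
  rw [integral_re_fourier_mul hg (integrable_fracLap hs hφ2 hc),
    integral_re_fourier_mul hσg (hφ.continuous.integrable_of_hasCompactSupport hc)]
  simp only [fourier_fracLap hs hφ2 hc, mul_left_comm, mul_assoc]

end FractionalLaplacian

section Gaussian

variable {E : Type*} [NormedAddCommGroup E]

/-- The Gaussian `e^{-π|x|²}`, a fixed point of the Fourier transform. It takes the place of the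
source term of the Riesz potential. -/
noncomputable def gaussian (x : E) : ℝ := Real.exp (-π * ‖x‖ ^ 2)

lemma continuous_gaussian : Continuous (gaussian : E → ℝ) := by
  unfold gaussian
  fun_prop

lemma gaussian_pos (x : E) : 0 < gaussian x := Real.exp_pos _

lemma gaussian_rpow (x : E) (q : ℝ) : gaussian x ^ q = Real.exp (-(π * q) * ‖x‖ ^ 2) := by
  rw [gaussian, ← Real.exp_mul]
  ring_nf

variable [InnerProductSpace ℝ E] [FiniteDimensional ℝ E] [MeasurableSpace E] [BorelSpace E]

lemma integral_gaussian_pos : 0 < ∫ x : E, gaussian x := by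
  unfold gaussian
  rw [GaussianFourier.integral_rexp_neg_mul_sq_norm Real.pi_pos]
  positivity

lemma fourier_gaussian (ξ : E) : 𝓕 (fun x : E => (gaussian x : ℂ)) ξ = gaussian ξ := by
  have hfourier := fourier_gaussian_innerProductSpace (V := E) (b := (π : ℂ))
    (by simpa using Real.pi_pos) ξ
  have hπ : (π : ℂ) ≠ 0 := Complex.ofReal_ne_zero.2 Real.pi_ne_zero
  rw [div_self hπ, Complex.one_cpow, one_mul, sq (π : ℂ), neg_mul, mul_assoc, neg_div,
    mul_div_cancel_left₀ _ hπ] at hfourier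
  simpa [gaussian] using hfourier

/-- The Riesz potential of order `2s` of the Gaussian, up to a positive constant, defined as the
Fourier transform of `|ξ|^{-2s} e^{-π|ξ|²}`. -/
noncomputable def gaussianRiesz (s : ℝ) (x : E) : ℝ :=
  (𝓕 (fun ξ : E => ((‖ξ‖ ^ (-(2 * s)) * gaussian ξ : ℝ) : ℂ)) x).re

lemma exists_abs_gaussianRiesz_le (s : ℝ) : ∃ B, ∀ x : E, |gaussianRiesz s x| ≤ B :=
  ⟨_, fun x => (Complex.abs_re_le_norm _).trans (norm_fourier_le _ x)⟩

variable [Nontrivial E] {s : ℝ}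

lemma integrable_norm_rpow_mul_gaussian (hs : 2 * s < finrank ℝ E) :
    Integrable fun ξ : E => ‖ξ‖ ^ (-(2 * s)) * gaussian ξ :=
  integrable_norm_rpow_mul_exp_neg_mul_sq (neg_lt_neg hs) Real.pi_pos

lemma continuous_gaussianRiesz (hs : 2 * s < finrank ℝ E) :
    Continuous (gaussianRiesz s : E → ℝ) :=
  Complex.continuous_re.comp (continuous_fourier (integrable_norm_rpow_mul_gaussian hs).ofReal)

end Gaussian

section GaussianRiesz

variable {d : ℕ} [NeZero d] {s : ℝ}

lemma exists_isDistFracLap_gaussianRiesz (hs : s ∈ Ioo (0 : ℝ) 1) (hds : 2 * s < d) (Cds : ℝ) :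
    ∃ c : ℝ, 0 < c ∧
      IsDistFracLap d s Cds (gaussianRiesz s) (fun x => Cds * c * gaussian x) := by
  obtain ⟨c, hc, hσ⟩ := exists_levySymbol_eq_mul_norm_rpow (E := Ed d) (dim_add_two_mul_mem_Ioo hs)
  rw [finrank_euclideanSpace_fin, add_sub_cancel_left] at hσ
  have hg : Integrable fun ξ : Ed d => ‖ξ‖ ^ (-(2 * s)) * gaussian ξ :=
    integrable_norm_rpow_mul_gaussian (by rwa [finrank_euclideanSpace_fin])
  have hgauss : Integrable (gaussian : Ed d → ℝ) :=
    .of_integral_ne_zero integral_gaussian_pos.ne'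
  have hcancel : (fun ξ : Ed d => ((Cds * levySymbol ((d : ℝ) + 2 * s) ξ : ℝ) : ℂ) *
      ((‖ξ‖ ^ (-(2 * s)) * gaussian ξ : ℝ) : ℂ)) =ᵐ[volume]
        fun ξ => (Cds * c) • (gaussian ξ : ℂ) := by
    filter_upwards [Measure.ae_ne volume 0] with ξ hξ
    have hpow : ‖ξ‖ ^ (2 * s) * ‖ξ‖ ^ (-(2 * s)) = 1 := by
      rw [← Real.rpow_add (norm_pos_iff.2 hξ), add_neg_cancel, Real.rpow_zero]
    rw [hσ, ← Complex.ofReal_mul, Complex.real_smul, ← Complex.ofReal_mul]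
    congr 1
    linear_combination Cds * c * gaussian ξ * hpow
  have hdist := isDistFracLap_re_fourier (g := fun ξ => ((‖ξ‖ ^ (-(2 * s)) * gaussian ξ : ℝ) : ℂ))
    hs hg.ofReal ((hgauss.ofReal.smul (Cds * c)).congr hcancel.symm)
  simp only [Real.fourier_congr_ae hcancel, fourier_const_smul, fourier_gaussian, Complex.smul_re,
    Complex.ofReal_re, smul_eq_mul] at hdist
  exact ⟨c, hc, hdist⟩

end GaussianRiesz

section WeightedSpaces

variable {d : ℕ} {p s Cds : ℝ} {ρ f : Ed d → ℝ}

lemma MemWLp.const_mul (hf : MemWLp d p ρ f) (a : ℝ) : MemWLp d p ρ fun x => a * f x := by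
  refine ⟨hf.1.const_mul a, (hf.2.const_mul (|a| ^ p)).congr (ae_of_all _ fun x => ?_)⟩
  simp only [abs_mul, Real.mul_rpow (abs_nonneg a) (abs_nonneg (f x)), mul_assoc]

lemma memWLp_zero (hp : p ≠ 0) : MemWLp d p ρ fun _ => 0 :=
  ⟨aestronglyMeasurable_const, by simp [Real.zero_rpow hp]⟩

lemma memWLp_of_abs_le (hρ : Integrable ρ) (hf : AEStronglyMeasurable f) (hp : 0 ≤ p) {B : ℝ}
    (hB : ∀ x, |f x| ≤ B) : MemWLp d p ρ f := by
  refine ⟨hf, hρ.bdd_mul (c := B ^ p) (hf.norm.aemeasurable.pow_const p).aestronglyMeasurable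
    (ae_of_all _ fun x => ?_)⟩
  rw [Real.norm_of_nonneg (by positivity)]
  exact Real.rpow_le_rpow (abs_nonneg _) (hB x) hp

variable [NeZero d] {c C γ₀ γ : ℝ}

lemma TwoPowerWeight.ae_pos (hw : TwoPowerWeight d ρ c C γ₀ γ) : ∀ᵐ x, 0 < ρ x := by
  obtain ⟨hc, -, hin, hout⟩ := hw
  filter_upwards [hin, hout, Measure.ae_ne volume 0] with x hxin hxout hx
  have hx0 : 0 < ‖x‖ := norm_pos_iff.2 hx
  rcases le_or_gt ‖x‖ 1 with h | h
  · exact (mul_pos hc (Real.rpow_pos_of_pos hx0 _)).trans_le (hxin h).1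
  · exact (mul_pos hc (Real.rpow_pos_of_pos hx0 _)).trans_le (hxout h).1

lemma TwoPowerWeight.integrable (hw : TwoPowerWeight d ρ c C γ₀ γ) (hρ : AEMeasurable ρ)
    (hγ₀ : γ₀ < d) (hγ : d < γ) : Integrable ρ := by
  refine integrable_of_norm_le_norm_rpow (C := C) (a := γ₀) (b := γ) hρ.aestronglyMeasurable
    (by rwa [finrank_euclideanSpace_fin]) (by rwa [finrank_euclideanSpace_fin]) ?_ ?_
  · filter_upwards [hw.ae_pos, hw.2.2.1] with x hx hxin h
    rw [Real.norm_of_nonneg hx.le]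
    exact (hxin h).2
  · filter_upwards [hw.ae_pos, hw.2.2.2] with x hx hxout h
    rw [Real.norm_of_nonneg hx.le]
    exact (hxout h).2

lemma TwoPowerWeight.ae_rpow_neg_le (hw : TwoPowerWeight d ρ c C γ₀ γ) {θ : ℝ} (hθ : 0 ≤ θ) :
    ∀ᵐ x, ρ x ^ (-θ) ≤ c ^ (-θ) * (‖x‖ ^ (γ₀ * θ) + ‖x‖ ^ (γ * θ)) := by
  obtain ⟨hc, -, hin, hout⟩ := hw
  have hpow : ∀ {x : Ed d} {a : ℝ}, x ≠ 0 → c * ‖x‖ ^ (-a) ≤ ρ x →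
      ρ x ^ (-θ) ≤ c ^ (-θ) * ‖x‖ ^ (a * θ) := fun {x a} hx h => by
    have hx0 : 0 < ‖x‖ := norm_pos_iff.2 hx
    refine (Real.rpow_le_rpow_of_nonpos (by positivity) h (neg_nonpos.2 hθ)).trans_eq ?_
    rw [Real.mul_rpow hc.le (by positivity), ← Real.rpow_mul hx0.le, neg_mul_neg]
  filter_upwards [hin, hout, Measure.ae_ne volume 0] with x hxin hxout hx
  rw [mul_add]
  rcases le_or_gt ‖x‖ 1 with h | h
  · exact (hpow hx (hxin h).1).trans (le_add_of_nonneg_right (by positivity))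
  · exact (hpow hx (hxout h).1).trans (le_add_of_nonneg_left (by positivity))

lemma TwoPowerWeight.memWLp_gaussian (hw : TwoPowerWeight d ρ c C γ₀ γ) (hρ : AEMeasurable ρ)
    {q θ : ℝ} (hq : 0 < q) (hθ : 0 ≤ θ) (hγ₀ : -(d : ℝ) < γ₀ * θ) (hγ : -(d : ℝ) < γ * θ) :
    MemWLp d q (fun x => ρ x ^ (-θ)) gaussian := by
  have hint : ∀ {t : ℝ}, -(d : ℝ) < t →
      Integrable fun x : Ed d => ‖x‖ ^ t * Real.exp (-(π * q) * ‖x‖ ^ 2) := fun ht =>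
    integrable_norm_rpow_mul_exp_neg_mul_sq (by rwa [finrank_euclideanSpace_fin]) (by positivity)
  refine ⟨continuous_gaussian.aestronglyMeasurable,
    (((hint hγ₀).add (hint hγ)).const_mul (c ^ (-θ))).mono' ?_ ?_⟩
  · exact ((continuous_gaussian.abs.measurable.pow_const q).aemeasurable.mul
      (hρ.pow_const _)).aestronglyMeasurable
  · filter_upwards [hw.ae_pos, hw.ae_rpow_neg_le hθ] with x hx hle
    have hgauss : |gaussian x| ^ q = Real.exp (-(π * q) * ‖x‖ ^ 2) := by
      rw [abs_of_pos (gaussian_pos x), gaussian_rpow]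
    rw [hgauss, Real.norm_of_nonneg (by positivity), mul_comm, Pi.add_apply, ← add_mul, ← mul_assoc]
    gcongr

lemma memX_const (hs : s ∈ Ioo (0 : ℝ) 1) (hp : 1 < p) (hρ : Integrable ρ) (a : ℝ) :
    MemX d s Cds p ρ (fun _ => a) fun _ => 0 :=
  ⟨memWLp_of_abs_le hρ aestronglyMeasurable_const (by linarith) fun _ => le_rfl,
    isDistFracLap_const hs a,
    memWLp_zero (div_pos (zero_lt_one.trans hp) (sub_pos.2 hp)).ne'⟩

lemma TwoPowerWeight.exists_memX_gaussianRiesz (hw : TwoPowerWeight d ρ c C γ₀ γ)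
    (hρ : AEMeasurable ρ) (hs : s ∈ Ioo (0 : ℝ) 1) (hds : 2 * s < d) (hp : 1 < p)
    (hγ₀ : γ₀ ∈ Ioo (-(d * (p - 1))) (d : ℝ)) (hγ : d < γ) :
    ∃ a : ℝ, 0 < a ∧ MemX d s Cds p ρ (gaussianRiesz s) fun x => Cds * a * gaussian x := by
  obtain ⟨a, ha, hdist⟩ := exists_isDistFracLap_gaussianRiesz hs hds Cds
  obtain ⟨B, hB⟩ := exists_abs_gaussianRiesz_le (E := Ed d) s
  have hp0 : 0 < p - 1 := sub_pos.2 hp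
  have hθ : p / (p - 1) - 1 = (p - 1)⁻¹ := by field_simp; ring
  have hcont : Continuous (gaussianRiesz s : Ed d → ℝ) :=
    continuous_gaussianRiesz (by rwa [finrank_euclideanSpace_fin])
  have hγθ : 0 ≤ γ * (p - 1)⁻¹ := mul_nonneg ((Nat.cast_nonneg d).trans hγ.le) (by positivity)
  have hdim : 0 < (d : ℝ) := Nat.cast_pos.2 (NeZero.pos d)
  refine ⟨a, ha, memWLp_of_abs_le (hw.integrable hρ hγ₀.2 hγ) hcont.aestronglyMeasurable
    (by linarith) hB, hdist, (hw.memWLp_gaussian hρ (by positivity) ?_ ?_ ?_).const_mul _⟩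
  · rw [hθ]
    positivity
  · rw [hθ, ← div_eq_mul_inv, lt_div_iff₀ hp0, neg_mul]
    exact hγ₀.1
  · rw [hθ]
    linarith

end WeightedSpaces

end Development

theorem stmt19_general (d : ℕ) (s : ℝ) (hs : s ∈ Ioo (0 : ℝ) 1)
    (hds : 2 * s < d) (Cds : ℝ) (hC : Cds ≠ 0) (p : ℝ) (hp : 1 < p)
    (ρ : Ed d → ℝ) (hρ : AEMeasurable ρ)
    (c C γ₀ γ : ℝ) (hw : TwoPowerWeight d ρ c C γ₀ γ)
    (hγ₀ : γ₀ ∈ Ioo (-(d * (p - 1))) (d : ℝ)) (hγ : d < γ) :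
    ∃ v V w W : Ed d → ℝ,
      MemX d s Cds p ρ v V ∧ MemX d s Cds p ρ w W ∧
      (∫ x : Ed d, v x * W x) ≠ ∫ x : Ed d, V x * w x := by
  have : NeZero d := ⟨by rintro rfl; rw [Nat.cast_zero] at hds; linarith [hs.1]⟩
  obtain ⟨a, ha, hW⟩ := hw.exists_memX_gaussianRiesz (Cds := Cds) hρ hs hds hp hγ₀ hγ
  refine ⟨_, _, _, _, memX_const hs hp (hw.integrable hρ hγ₀.2 hγ) 1, hW, ?_⟩
  simp only [one_mul, zero_mul, integral_zero, integral_const_mul]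
  exact mul_ne_zero (mul_ne_zero hC ha.ne') integral_gaussian_pos.ne'

theorem stmt19 (d : ℕ) (hd : 1 ≤ d) (s : ℝ) (hs : s ∈ Set.Ioo (0:ℝ) 1)
    (hds : 2 * s < (d:ℝ)) (Cds : ℝ) (hC : 0 < Cds)
    (p : ℝ) (hp1 : 2 ≤ p) (hp2 : p ≤ 2 * d / ((d:ℝ) - 2 * s))
    (ρ : Ed d → ℝ) (hρpos : ∀ x, 0 < ρ x) (hρm : Measurable ρ)
    (c C γ₀ γ : ℝ) (hw : TwoPowerWeight d ρ c C γ₀ γ)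
    (hγ₀ : γ₀ ∈ Set.Ico (0:ℝ) d)
    (hγ : γ ∈ Set.Ioc (d:ℝ) ((d:ℝ) + p * s)) :
    ∃ v V w W : Ed d → ℝ,
      MemX d s Cds p ρ v V ∧ MemX d s Cds p ρ w W ∧
      (∫ x : Ed d, v x * W x) ≠ ∫ x : Ed d, V x * w x :=
  stmt19_general d s hs hds Cds hC.ne' p (by linarith) ρ hρm.aemeasurable c C γ₀ γ hw
    ⟨by nlinarith [hγ₀.1, hγ₀.2], hγ₀.2⟩ hγ.1
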